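/- Let n ≥ 3 and let Q ∈ O(n) be PP. Then the maximal Gaussian-elimination intermediate entry satisfies max_{1≤k≤n} max_{k≤i,j≤n} |Q^{(k)}_{ij}| ≤ √(2α_{n−1}), with equality if and only if Q = D Q_n D̃ for some diagonal matrices D, D̃ with diagonal entries ±1, where Q_n = Q̂ D̂^{−1/2}. -/

import Mathlib

open Matrix Filter

/-- Gaussian-elimination intermediate entry `A^{(k+1)}_{ij}` (0-indexed step `k`):
the Schur complement of the leading `k × k` block. -/
noncomputable def geEntry {n : ℕ} (A : Matrix (Fin n) (Fin n) ℝ) (k i j : Fin n) : ℝ :=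
  A i j - ∑ a : Fin k.val, ∑ b : Fin k.val,
    A i (Fin.castLE k.isLt.le a) *
      (A.submatrix (Fin.castLE k.isLt.le) (Fin.castLE k.isLt.le))⁻¹ a b *
      A (Fin.castLE k.isLt.le b) j

/-- `A` is PP: at each GE step the pivot dominates its column. -/
def IsPP {n : ℕ} (A : Matrix (Fin n) (Fin n) ℝ) : Prop :=
  ∀ k i : Fin n, k ≤ i → |geEntry A k i k| ≤ |geEntry A k k k|

/-- `A` is CP: at each GE step the pivot dominates the whole untriangularized block. -/
def IsCP {n : ℕ} (A : Matrix (Fin n) (Fin n) ℝ) : Prop :=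
  ∀ k i j : Fin n, k ≤ i → k ≤ j → |geEntry A k i j| ≤ |geEntry A k k k|

/-- Maximal absolute Gaussian-elimination intermediate entry of `A`. -/
noncomputable def maxGE {n : ℕ} (A : Matrix (Fin n) (Fin n) ℝ) : ℝ :=
  ⨆ k : Fin n, ⨆ i : {i : Fin n // k ≤ i}, ⨆ j : {j : Fin n // k ≤ j},
    |geEntry A k i.1 j.1|

/-- `max_{i,j} |A_{ij}|`. -/
noncomputable def maxAbs {n : ℕ} (A : Matrix (Fin n) (Fin n) ℝ) : ℝ :=
  ⨆ i, ⨆ j, |A i j|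

/-- Growth factor `ρ(A)`. -/
noncomputable def growth {n : ℕ} (A : Matrix (Fin n) (Fin n) ℝ) : ℝ :=
  maxGE A / maxAbs A

/-- `P` is a permutation matrix. -/
def IsPermMatrix {n : ℕ} (P : Matrix (Fin n) (Fin n) ℝ) : Prop :=
  ∃ σ : Equiv.Perm (Fin n), P = σ.permMatrix ℝ

/-- `D` is a diagonal matrix with diagonal entries `±1`. -/
def IsSignDiag {n : ℕ} (D : Matrix (Fin n) (Fin n) ℝ) : Prop :=
  (∀ i j, i ≠ j → D i j = 0) ∧ (∀ i, D i i = 1 ∨ D i i = -1)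

/-- Wilkinson's unipotent lower triangular matrix `L_n`. -/
def Lmat (n : ℕ) : Matrix (Fin n) (Fin n) ℝ :=
  fun i j => if i = j then 1 else if j < i then -1 else 0

/-- Wilkinson's upper triangular factor `U_n`. -/
def Umat (n : ℕ) : Matrix (Fin n) (Fin n) ℝ :=
  fun i j => if (j : ℕ) = n - 1 then 2 ^ (i : ℕ) else if i = j then 1 else 0

/-- Wilkinson's worst-case GEPP growth matrix `A_n`. -/
def Amat (n : ℕ) : Matrix (Fin n) (Fin n) ℝ :=
  fun i j =>
    if (j : ℕ) = n - 1 ∧ (i : ℕ) < n - 1 then 1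
    else if i = j then 1
    else if j < i then -1
    else 0

/-- `α_j = 1 + (2/3)(4^{j-1} - 1)` (1-indexed `j`). -/
noncomputable def alpha (j : ℕ) : ℝ := 1 + 2 / 3 * (4 ^ (j - 1) - 1)

/-- The unnormalized orthogonal factor `Q̂` (columns of `Qhat n` are, 1-indexed,
the columns described in the paper; here 0-indexed). -/
noncomputable def Qhat (n : ℕ) : Matrix (Fin n) (Fin n) ℝ :=
  fun i j =>
    if (j : ℕ) = n - 1 then
      if (i : ℕ) = n - 1 then 1 else 2 ^ (n - 2 - (i : ℕ))
    else if (j : ℕ) = n - 2 then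
      if (i : ℕ) = n - 2 then 1 else if (i : ℕ) = n - 1 then -1 else 0
    else if (i : ℕ) < (j : ℕ) then
      -((n : ℝ) - (j : ℕ) - 2) * 2 ^ ((j : ℕ) - (i : ℕ) - 1)
    else if (i : ℕ) = (j : ℕ) then
      ((n : ℝ) - (j : ℕ) - 1) * (alpha ((j : ℕ) + 1) - 1) + 1
    else -alpha ((j : ℕ) + 1)

/-- The diagonal normalization matrix `D̂`. -/
noncomputable def Dhat (n : ℕ) : Matrix (Fin n) (Fin n) ℝ :=
  Matrix.diagonal fun j =>
    if (j : ℕ) = 0 then (n : ℝ)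
    else if (j : ℕ) = n - 2 then 2
    else if (j : ℕ) = n - 1 then 2 * alpha (n - 1)
    else ((n : ℝ) - (j : ℕ) - 1) ^ 2 * (alpha ((j : ℕ) + 1) - 1) ^ 2 *
        (2 * alpha ((j : ℕ) + 1) - 1) / (2 * alpha ((j : ℕ) + 1) - 2) +
      ((n : ℝ) - (j : ℕ) - 1) * (alpha ((j : ℕ) + 1) ^ 2 + alpha ((j : ℕ) + 1) - 1) +
      2 * alpha (j : ℕ)

/-- `Q_n = Q̂ D̂^{-1/2}`, the orthogonal QR factor of `L_n`. -/
noncomputable def Qmat (n : ℕ) : Matrix (Fin n) (Fin n) ℝ :=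
  Qhat n * Matrix.diagonal fun m => (Real.sqrt (Dhat n m m))⁻¹

/-- Frobenius norm. -/
noncomputable def frobNorm {n : ℕ} (M : Matrix (Fin n) (Fin n) ℝ) : ℝ :=
  Real.sqrt (∑ i, ∑ j, M i j ^ 2)

/-- The Givens rotation `G(θ, i, j)`. -/
noncomputable def givens (n : ℕ) (θ : ℝ) (i j : Fin n) : Matrix (Fin n) (Fin n) ℝ :=
  fun a b =>
    if a = i ∧ b = i then Real.cos θ
    else if a = j ∧ b = j then Real.cos θ
    else if a = i ∧ b = j then -Real.sin θ
    else if a = j ∧ b = i then Real.sin θ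
    else if a = b then 1 else 0

/-- The ordered product of Givens rotations `Q(θ) = ∏_{i=1}^{n-1} ∏_{j=i+1}^n G(θ_{ij}, i, j)`. -/
noncomputable def QofTheta (n : ℕ) (θ : Fin n → Fin n → ℝ) : Matrix (Fin n) (Fin n) ℝ :=
  ((List.finRange n).map fun i =>
    (((List.finRange n).filter fun j => decide (i < j)).map fun j =>
      givens n (θ i j) i j).prod).prod

open Matrix

noncomputable def gN {n : ℕ} (A : Matrix (Fin n) (Fin n) ℝ) : ℕ → Matrix (Fin n) (Fin n) ℝ
  | 0 => 1
  | k + 1 => fun i a =>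
      if h : k < (i : ℕ) then
        gN A k i a - ((gN A k * A) i ⟨k, h.trans i.isLt⟩ /
          (gN A k * A) ⟨k, h.trans i.isLt⟩ ⟨k, h.trans i.isLt⟩) * gN A k ⟨k, h.trans i.isLt⟩ a
      else gN A k i a

noncomputable def gE {n : ℕ} (A : Matrix (Fin n) (Fin n) ℝ) (k : ℕ) : Matrix (Fin n) (Fin n) ℝ :=
  gN A k * A

noncomputable def gL {n : ℕ} (A : Matrix (Fin n) (Fin n) ℝ) (i k : Fin n) : ℝ :=
  gE A k i k / gE A k k k

section
variable {n : ℕ} (A : Matrix (Fin n) (Fin n) ℝ)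

lemma gN_zero : gN A 0 = 1 := rfl

lemma gN_succ (k i a : Fin n) (h : k < i) :
    gN A ((k : ℕ) + 1) i a = gN A k i a - gL A i k * gN A k k a := by
  have h' : (k : ℕ) < i := h
  simp [gN, gL, gE, h']

lemma gN_succ_of_le (k : ℕ) (i a : Fin n) (h : (i : ℕ) ≤ k) :
    gN A (k + 1) i a = gN A k i a := by
  simp [gN, not_lt.mpr h]

lemma gE_succ (k i j : Fin n) (h : k < i) :
    gE A ((k : ℕ) + 1) i j = gE A k i j - gL A i k * gE A k k j := by
  simp only [gE, Matrix.mul_apply]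
  rw [Finset.mul_sum, ← Finset.sum_sub_distrib]
  refine Finset.sum_congr rfl fun a _ => ?_
  rw [gN_succ A k i a h]
  ring

lemma gE_succ_of_le (k : ℕ) (i j : Fin n) (h : (i : ℕ) ≤ k) :
    gE A (k + 1) i j = gE A k i j := by
  simp only [gE, Matrix.mul_apply]
  exact Finset.sum_congr rfl fun a _ => by rw [gN_succ_of_le A k i a h]

lemma gN_struct (k : ℕ) : (∀ i a : Fin n, i < a → gN A k i a = 0) ∧ (∀ i, gN A k i i = 1) ∧
    (∀ i a : Fin n, k ≤ (a : ℕ) → a ≠ i → gN A k i a = 0) := by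
  induction k with
  | zero =>
    refine ⟨fun i a h => ?_, fun i => ?_, fun i a _ h => ?_⟩
    · simp [gN_zero, h.ne]
    · simp [gN_zero]
    · simp [gN_zero, h.symm]
  | succ k ih =>
    obtain ⟨h1, h2, h3⟩ := ih
    refine ⟨fun i a h => ?_, fun i => ?_, fun i a hk h => ?_⟩
    · by_cases hk : k < (i : ℕ)
      · have := gN_succ A ⟨k, hk.trans i.isLt⟩ i a hk
        simp only at this
        rw [this, h1 i a h, h1 _ a (lt_trans (show (⟨k, hk.trans i.isLt⟩ : Fin n) < i from hk) h)]
        ring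
      · rw [gN_succ_of_le A k i a (not_lt.mp hk), h1 i a h]
    · by_cases hk : k < (i : ℕ)
      · have := gN_succ A ⟨k, hk.trans i.isLt⟩ i i hk
        simp only at this
        rw [this, h2 i, h1 _ i (show (⟨k, hk.trans i.isLt⟩ : Fin n) < i from hk)]
        ring
      · rw [gN_succ_of_le A k i i (not_lt.mp hk), h2 i]
    · by_cases hki : k < (i : ℕ)
      · have := gN_succ A ⟨k, hki.trans i.isLt⟩ i a hki
        simp only at this
        rw [this, h3 i a (by omega) h, h1 _ a (show (⟨k, hki.trans i.isLt⟩ : Fin n) < a from hk)]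
        ring
      · rw [gN_succ_of_le A k i a (not_lt.mp hki), h3 i a (by omega) h]

lemma gE_zero_below (k : ℕ) (hp : ∀ q : Fin n, (q : ℕ) < k → gE A q q q ≠ 0) :
    ∀ i j : Fin n, (j : ℕ) < k → j < i → gE A k i j = 0 := by
  induction k with
  | zero => intro i j h; omega
  | succ k ih =>
    intro i j hj hji
    have ih' := ih fun q hq => hp q (by omega)
    by_cases hki : k < (i : ℕ)
    · have := gE_succ A ⟨k, hki.trans i.isLt⟩ i j hki
      simp only at this
      rw [this]
      by_cases hjk : (j : ℕ) < k
      · rw [ih' i j hjk hji, ih' _ j hjk hjk]; ring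
      · have hjk : j = ⟨k, hki.trans i.isLt⟩ := Fin.ext (by simp; omega)
        subst hjk
        have := hp ⟨k, hki.trans i.isLt⟩ (by simp)
        simp only [gL] at this ⊢
        field_simp
        ring
    · rw [gE_succ_of_le A k i j (not_lt.mp hki)]
      exact ih' i j (lt_of_lt_of_le hji (not_lt.mp hki)) hji

lemma gE_row_fixed (i j : Fin n) (k : ℕ) (h : (i : ℕ) ≤ k) : gE A k i j = gE A i i j := by
  induction k, h using Nat.le_induction with
  | base => rfl
  | succ k hk ih => rw [gE_succ_of_le A k i j hk, ih]

lemma gN_bound (hL : ∀ i k : Fin n, k ≤ i → |gL A i k| ≤ 1) (k : ℕ) :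
    ∀ i a : Fin n, (a : ℕ) < k → k ≤ (i : ℕ) → |gN A k i a| ≤ 2 ^ (k - 1 - (a : ℕ)) := by
  induction k with
  | zero => intro i a h; omega
  | succ k ih =>
    intro i a ha hi
    have hki : k < (i : ℕ) := hi
    set kk : Fin n := ⟨k, hki.trans i.isLt⟩ with hkk
    have h := gN_succ A kk i a hki
    have hl := hL i kk (le_of_lt hki)
    have e1 : gN A (k+1) i a = gN A k i a - gL A i kk * gN A k kk a := h
    rw [e1]
    by_cases hak : (a : ℕ) < k
    · have h1 := ih i a hak hki.le
      have h2 := ih kk a hak le_rfl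
      have e : k + 1 - 1 - (a : ℕ) = (k - 1 - (a : ℕ)) + 1 := by omega
      rw [e, pow_succ]
      calc |gN A k i a - gL A i kk * gN A k kk a| ≤ |gN A k i a| + |gL A i kk * gN A k kk a| := abs_sub _ _
        _ ≤ 2 ^ (k - 1 - (a : ℕ)) + 1 * 2 ^ (k - 1 - (a : ℕ)) := by
            rw [abs_mul]; gcongr
        _ = _ := by ring
    · have hak : a = kk := Fin.ext (by simp [hkk]; omega)
      subst hak
      rw [(gN_struct A k).2.2 i _ le_rfl (by intro h; rw [← h] at hki; simp [hkk] at hki), (gN_struct A k).2.1]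
      simpa [hkk] using hl

lemma sum_castLE {k : ℕ} (hk : k ≤ n) (f : Fin n → ℝ) (hf : ∀ c : Fin n, k ≤ (c : ℕ) → f c = 0) :
    ∑ c, f c = ∑ c : Fin k, f (Fin.castLE hk c) := by
  symm
  apply Finset.sum_of_injOn (Fin.castLE hk)
  · exact (Fin.castLE_injective hk).injOn
  · simp
  · intro c _ hc
    apply hf
    by_contra h
    exact hc ⟨⟨c, by omega⟩, by simp, by ext; simp⟩
  · simp

lemma leading_det (k : ℕ) (hk : k ≤ n) (hp : ∀ q : Fin n, (q : ℕ) < k → gE A q q q ≠ 0) :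
    (A.submatrix (Fin.castLE hk) (Fin.castLE hk)).det ≠ 0 := by
  have h : (gN A k).submatrix (Fin.castLE hk) (Fin.castLE hk) *
      A.submatrix (Fin.castLE hk) (Fin.castLE hk) =
      (gE A k).submatrix (Fin.castLE hk) (Fin.castLE hk) := by
    ext a b
    simp only [gE, Matrix.mul_apply, Matrix.submatrix_apply]
    rw [sum_castLE hk]
    intro c hc
    rw [(gN_struct A k).1 _ _ (show Fin.castLE hk a < c from Fin.lt_def.mpr (by simp; omega)), zero_mul]
  have h2 : ((gE A k).submatrix (Fin.castLE hk) (Fin.castLE hk)).det ≠ 0 := by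
    rw [Matrix.det_of_isUpperTriangular]
    · refine Finset.prod_ne_zero_iff.mpr fun a _ => ?_
      simp only [Matrix.submatrix_apply]
      rw [gE_row_fixed A _ _ k (by simp)]
      exact hp _ (by simp)
    · intro i j hij
      exact gE_zero_below A k hp _ _ (by simp) (by simpa using hij)
  rw [← h, Matrix.det_mul] at h2
  exact right_ne_zero_of_mul h2

lemma geEntry_eq (k i j : Fin n) (hki : k ≤ i) (hp : ∀ q : Fin n, q < k → gE A q q q ≠ 0) :
    geEntry A k i j = gE A k i j := by
  have hd := leading_det A k k.isLt.le hp
  set B := A.submatrix (Fin.castLE k.isLt.le) (Fin.castLE k.isLt.le) with hB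
  have hz := gE_zero_below A k hp
  have key : ∀ j, gE A k i j = A i j + ∑ c : Fin k,
      gN A k i (Fin.castLE k.isLt.le c) * A (Fin.castLE k.isLt.le c) j := by
    intro j
    have h := sum_castLE k.isLt.le (fun c => (if c = i then 0 else gN A k i c) * A c j) (by
      intro c hc
      by_cases h : c = i
      · simp [h]
      · simp [h, (gN_struct A k).2.2 i c hc h])
    have h' : ∀ c : Fin k, (if Fin.castLE k.isLt.le c = i then 0 else
        gN A k i (Fin.castLE k.isLt.le c)) = gN A k i (Fin.castLE k.isLt.le c) := by
      intro c
      rw [if_neg]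
      intro h
      have h1 : (c : ℕ) = i := by rw [← h]; simp
      have h2 : (k : ℕ) ≤ i := hki
      omega
    simp only [h'] at h
    rw [← h]
    simp only [gE, Matrix.mul_apply]
    have e : A i j = ∑ c, (if c = i then 1 else 0) * A c j := by simp
    rw [e, ← Finset.sum_add_distrib]
    refine Finset.sum_congr rfl fun c _ => ?_
    by_cases h : c = i
    · subst h; simp [(gN_struct A k).2.1]
    · simp [h]
  set m : Fin k → ℝ := fun c => gN A k i (Fin.castLE k.isLt.le c) with hm
  set r : Fin k → ℝ := fun c => A i (Fin.castLE k.isLt.le c) with hr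
  have hmr : m ᵥ* B = - r := by
    ext b
    have h0 := hz i (Fin.castLE k.isLt.le b) (by simp) (by
      have h2 : (k : ℕ) ≤ i := hki
      exact Fin.lt_def.mpr (by simp; omega))
    rw [key] at h0
    simp only [Matrix.vecMul, dotProduct, hm, hr, hB, Matrix.submatrix_apply, Pi.neg_apply]
    linarith
  have hmm : m = - (r ᵥ* B⁻¹) := by
    rw [← Matrix.neg_vecMul, ← hmr, Matrix.vecMul_vecMul, Matrix.mul_nonsing_inv _ (Ne.isUnit hd),
      Matrix.vecMul_one]
  have hmc : ∀ c, gN A k i (Fin.castLE k.isLt.le c) = - ∑ a, r a * B⁻¹ a c := by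
    intro c
    have := congrFun hmm c
    simpa [Matrix.vecMul, dotProduct] using this
  rw [key j, geEntry, ← hB, sub_eq_add_neg, Finset.sum_comm, ← Finset.sum_neg_distrib]
  congr 1
  refine Finset.sum_congr rfl fun c _ => ?_
  rw [hmc, ← Finset.sum_mul]
  ring

lemma gN_det (k : ℕ) : (gN A k).det = 1 := by
  rw [Matrix.det_of_isLowerTriangular]
  · simp [(gN_struct A k).2.1]
  · intro i j h
    exact (gN_struct A k).1 i j h

lemma pivot_ne (hA : A.det ≠ 0) (hPP : IsPP A) : ∀ k : Fin n, gE A k k k ≠ 0 := by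
  intro k
  induction k using WellFoundedLT.induction with
  | ind k ih =>
    intro h0
    have hcol : ∀ i : Fin n, k ≤ i → gE A k i k = 0 := by
      intro i hi
      have h := hPP k i hi
      rw [geEntry_eq A k i k hi ih, geEntry_eq A k k k le_rfl ih, h0, abs_zero] at h
      exact abs_eq_zero.mp (le_antisymm h (abs_nonneg _))
    have hz := gE_zero_below A k ih
    have hall : ∀ i j : Fin n, k ≤ i → j ≤ k → gE A k i j = 0 := by
      intro i j hi hj
      rcases hj.lt_or_eq with h | h
      · exact hz i j h (lt_of_lt_of_le h hi)
      · rw [h]; exact hcol i hi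
    have hd : (gE A k).det ≠ 0 := by
      rw [gE, Matrix.det_mul, gN_det, one_mul]; exact hA
    apply hd
    rw [Matrix.twoBlockTriangular_det (gE A k) (fun i => i ≤ k)
      (fun i hi j hj => hall i j (not_le.mp hi).le hj)]
    rw [Matrix.det_eq_zero_of_row_eq_zero (⟨k, le_rfl⟩ : {i // i ≤ k}), zero_mul]
    intro j
    exact hall k j.1 le_rfl j.2

lemma gL_le (hA : A.det ≠ 0) (hPP : IsPP A) (i k : Fin n) (h : k ≤ i) : |gL A i k| ≤ 1 := by
  have hp := pivot_ne A hA hPP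
  have := hPP k i h
  rw [geEntry_eq A k i k h fun q _ => hp q, geEntry_eq A k k k le_rfl fun q _ => hp q] at this
  rw [gL, abs_div, div_le_one (abs_pos.mpr (hp k))]
  exact this

lemma row_norm (hQ : Aᵀ * A = 1) (k : ℕ) (i : Fin n) :
    ∑ j, gE A k i j ^ 2 = ∑ a, gN A k i a ^ 2 := by
  have hQ' : A * Aᵀ = 1 := mul_eq_one_comm.mp hQ
  have h : gE A k * (gE A k)ᵀ = gN A k * (gN A k)ᵀ := by
    rw [gE, Matrix.transpose_mul, Matrix.mul_assoc, ← Matrix.mul_assoc A, hQ', Matrix.one_mul]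
  have := congrFun (congrFun h i) i
  simpa [Matrix.mul_apply, ← pow_two] using this

/-- bound on the coefficients as a total function -/
noncomputable def cb (k i a : ℕ) : ℝ := if a < k then 2 ^ (k - 1 - a) else if a = i then 1 else 0

lemma gN_abs_le_cb (hL : ∀ i k : Fin n, k ≤ i → |gL A i k| ≤ 1) (k : ℕ) (i a : Fin n)
    (hk : k ≤ (i : ℕ)) : |gN A k i a| ≤ cb k i a := by
  unfold cb
  split_ifs with h1 h2
  · exact gN_bound A hL k i a h1 hk
  · have : a = i := Fin.ext h2
    subst this; simp [(gN_struct A k).2.1]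
  · rw [(gN_struct A k).2.2 i a (not_lt.mp h1) (fun h => h2 (by rw [h]))]; simp

lemma sum_cb (k : ℕ) (i : Fin n) (hk : k ≤ (i : ℕ)) :
    ∑ a : Fin n, cb k i a ^ 2 = 1 + ((4 : ℝ) ^ k - 1) / 3 := by
  have h1 : ∀ k : ℕ, ∑ a ∈ Finset.range k, ((2 : ℝ) ^ (k - 1 - a)) ^ 2 = (4 ^ k - 1) / 3 := by
    intro k
    rw [Finset.sum_range_reflect (fun a => ((2 : ℝ) ^ a) ^ 2)]
    induction k with
    | zero => simp
    | succ k ih =>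
      rw [Finset.sum_range_succ, ih, ← pow_mul, mul_comm k 2, pow_mul, pow_succ]; norm_num; ring
  have e : ∀ a : Fin n, cb k i a ^ 2 = (if (a : ℕ) < k then ((2 : ℝ) ^ (k - 1 - (a : ℕ))) ^ 2 else 0)
      + (if a = i then 1 else 0) := by
    intro a
    unfold cb
    by_cases h : (a : ℕ) < k
    · have : a ≠ i := fun h' => by rw [h'] at h; omega
      simp [h, this]
    · simp [h, Fin.ext_iff]
  rw [Finset.sum_congr rfl fun a _ => e a, Finset.sum_add_distrib, add_comm]
  congr 1
  · simp
  · rw [sum_castLE (hk.trans i.isLt.le) _ (fun c hc => if_neg (not_lt.mpr hc)), ← h1 k, ← Fin.sum_univ_eq_sum_range]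
    simp

lemma entry_sq_le (hQ : Aᵀ * A = 1) (hL : ∀ i k : Fin n, k ≤ i → |gL A i k| ≤ 1) (k : ℕ)
    (i j : Fin n) (hk : k ≤ (i : ℕ)) : gE A k i j ^ 2 ≤ 1 + ((4 : ℝ) ^ k - 1) / 3 := by
  calc gE A k i j ^ 2 ≤ ∑ j, gE A k i j ^ 2 :=
        Finset.single_le_sum (f := fun j => gE A k i j ^ 2) (fun _ _ => sq_nonneg _) (Finset.mem_univ j)
    _ = ∑ a, gN A k i a ^ 2 := row_norm A hQ k i
    _ ≤ ∑ a : Fin n, cb k i a ^ 2 := by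
        refine Finset.sum_le_sum fun a _ => ?_
        rw [← sq_abs]
        exact pow_le_pow_left₀ (abs_nonneg _) (gN_abs_le_cb A hL k i a hk) 2
    _ = _ := sum_cb k i hk

/-- equality case: all coefficients extreme -/
lemma coeff_eq (hQ : Aᵀ * A = 1) (hL : ∀ i k : Fin n, k ≤ i → |gL A i k| ≤ 1) (k : ℕ)
    (i j : Fin n) (hk : k ≤ (i : ℕ)) (h : gE A k i j ^ 2 = 1 + ((4 : ℝ) ^ k - 1) / 3) (a : Fin n)
    (ha : (a : ℕ) < k) : |gN A k i a| = 2 ^ (k - 1 - (a : ℕ)) := by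
  have h1 : ∀ a ∈ Finset.univ, gN A k i a ^ 2 ≤ cb k i (a : Fin n) ^ 2 := by
    intro a _
    rw [← sq_abs]
    exact pow_le_pow_left₀ (abs_nonneg _) (gN_abs_le_cb A hL k i a hk) 2
  have h2 : ∑ a, gN A k i a ^ 2 = ∑ a : Fin n, cb k i a ^ 2 := by
    apply le_antisymm (Finset.sum_le_sum h1)
    rw [sum_cb k i hk, ← h, ← row_norm A hQ k i]
    exact Finset.single_le_sum (f := fun j => gE A k i j ^ 2) (fun _ _ => sq_nonneg _) (Finset.mem_univ j)
  have h3 := (Finset.sum_eq_sum_iff_of_le h1).mp h2 a (Finset.mem_univ a)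
  rw [cb, if_pos ha, ← sq_abs] at h3
  exact (sq_eq_sq₀ (abs_nonneg _) (by positivity)).mp h3

/-- one-step propagation of extremality -/
lemma extreme_step (hL : ∀ i k : Fin n, k ≤ i → |gL A i k| ≤ 1) (k i : Fin n) (hki : k < i)
    (h : ∀ a : Fin n, (a : ℕ) < (k : ℕ) + 1 → |gN A ((k : ℕ) + 1) i a| = 2 ^ ((k : ℕ) - (a : ℕ))) :
    (∀ a : Fin n, a < k → |gN A k i a| = 2 ^ ((k : ℕ) - 1 - (a : ℕ))) ∧
    (∀ a : Fin n, a < k → |gN A k k a| = 2 ^ ((k : ℕ) - 1 - (a : ℕ))) ∧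
    |gL A i k| = 1 ∧ gN A ((k : ℕ) + 1) i k = - gL A i k ∧
    (∀ a : Fin n, a < k → gN A k i a = - gL A i k * gN A k k a) := by
  have hkk : gN A ((k : ℕ) + 1) i k = - gL A i k := by
    rw [gN_succ A k i k hki, (gN_struct A k).2.1, (gN_struct A k).2.2 i k le_rfl hki.ne]; ring
  have hl1 : |gL A i k| = 1 := by
    have := h k (by omega)
    rw [hkk, abs_neg] at this
    simpa using this
  have main : ∀ a : Fin n, a < k → |gN A k i a| = 2 ^ ((k : ℕ) - 1 - (a : ℕ)) ∧
      |gN A k k a| = 2 ^ ((k : ℕ) - 1 - (a : ℕ)) ∧ gN A k i a = - gL A i k * gN A k k a := by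
    intro a ha
    have ha' : (a : ℕ) < k := ha
    have b1 := gN_bound A hL k i a ha' hki.le
    have b2 := gN_bound A hL k k a ha' le_rfl
    have b3 := h a (by omega)
    have e : (k : ℕ) - (a : ℕ) = ((k : ℕ) - 1 - (a : ℕ)) + 1 := by omega
    rw [e, pow_succ, gN_succ A k i a hki] at b3
    generalize (2 : ℝ) ^ ((k : ℕ) - 1 - (a : ℕ)) = p at *
    generalize gN A k i a = x at *
    generalize gN A k k a = y at *
    generalize gL A i k = l at *
    rw [abs_le] at b1 b2
    rcases (abs_eq zero_le_one).mp hl1 with rfl | rfl <;>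
    rcases abs_cases (x - _ * y) with ⟨h1, h2⟩ | ⟨h1, h2⟩ <;> rw [h1] at b3
    · have hx : x = p := by linarith
      have hy : y = -p := by linarith
      have : 0 ≤ p := by linarith
      subst hx; subst hy
      simp [abs_of_nonneg this]
    · have hx : x = -p := by linarith
      have hy : y = p := by linarith
      have : 0 ≤ p := by linarith
      subst hx; subst hy
      simp [abs_of_nonneg this]
    · have hx : x = p := by linarith
      have hy : y = p := by linarith
      have : 0 ≤ p := by linarith
      subst hx; subst hy
      simp [abs_of_nonneg this]
    · have hx : x = -p := by linarith
      have hy : y = -p := by linarith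
      have : 0 ≤ p := by linarith
      subst hx; subst hy
      simp [abs_of_nonneg this]
  exact ⟨fun a ha => (main a ha).1, fun a ha => (main a ha).2.1, hl1, hkk, fun a ha => (main a ha).2.2⟩

end

section
variable {n : ℕ} (A : Matrix (Fin n) (Fin n) ℝ)

lemma extreme_descend (hL : ∀ i k : Fin n, k ≤ i → |gL A i k| ≤ 1) (i : Fin n) (k k' : ℕ)
    (hkk : k ≤ k') (hk' : k' ≤ (i : ℕ))
    (h : ∀ a : Fin n, (a : ℕ) < k' → |gN A k' i a| = 2 ^ (k' - 1 - (a : ℕ))) :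
    ∀ a : Fin n, (a : ℕ) < k → |gN A k i a| = 2 ^ (k - 1 - (a : ℕ)) := by
  induction k', hkk using Nat.le_induction with
  | base => exact h
  | succ q hq ih =>
    apply ih (by omega)
    have hqi : (⟨q, by omega⟩ : Fin n) < i := Fin.lt_def.mpr (by simp; omega)
    intro a ha
    exact (extreme_step A hL ⟨q, by omega⟩ i hqi (fun a ha => by
      have := h a ha
      simpa using this)).1 a ha

lemma signs (hL : ∀ i k : Fin n, k ≤ i → |gL A i k| ≤ 1) (m : Fin n) (hm : ∀ i, i ≤ m)
    (h : ∀ a : Fin n, (a : ℕ) < m → |gN A m m a| = 2 ^ ((m : ℕ) - 1 - (a : ℕ))) :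
    ∃ s : Fin n → ℝ, (∀ i, s i = 1 ∨ s i = -1) ∧ ∀ i k : Fin n, k < i → gL A i k = - (s i * s k) := by
  have hm1 : ∀ k : ℕ, k ≤ (m : ℕ) → ∀ a : Fin n, (a : ℕ) < k → |gN A k m a| = 2 ^ (k - 1 - (a : ℕ)) :=
    fun k hk => extreme_descend A hL m k m hk le_rfl h
  have hd : ∀ k : Fin n, ∀ a : Fin n, a < k → |gN A k k a| = 2 ^ ((k : ℕ) - 1 - (a : ℕ)) := by
    intro k
    rcases (hm k).lt_or_eq with hk | hk
    · exact (extreme_step A hL k m hk (fun a ha => by simpa using hm1 (k + 1) hk a ha)).2.1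
    · rw [hk]; exact h
  have hall : ∀ (k i : Fin n), k < i → ∀ a : Fin n, (a : ℕ) < (k : ℕ) + 1 →
      |gN A ((k : ℕ) + 1) i a| = 2 ^ ((k : ℕ) - (a : ℕ)) := by
    intro k i hki a ha
    simpa using extreme_descend A hL i (k + 1) i hki le_rfl (hd i) a ha
  have step := fun k i hki => extreme_step A hL k i hki (hall k i hki)
  have hval : ∀ (i a : Fin n), a < i → ∀ k : ℕ, (a : ℕ) + 1 ≤ k → k ≤ (i : ℕ) →
      gN A k i a = - 2 ^ (k - 1 - (a : ℕ)) * gL A i a := by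
    intro i a hai k hak
    induction k, hak using Nat.le_induction with
    | base => intro _; rw [(step a i hai).2.2.2.1]; simp
    | succ q hq ih =>
      intro hqi
      have hqi' : (⟨q, by omega⟩ : Fin n) < i := Fin.lt_def.mpr (by simp; omega)
      have h1 := ih (by omega)
      have h2 := (step ⟨q, by omega⟩ i hqi').2.2.2.2 a (Fin.lt_def.mpr (by simp; omega))
      have h3 := gN_succ A ⟨q, by omega⟩ i a hqi'
      simp only at h2 h3
      rw [h3]
      have e : q + 1 - 1 - (a : ℕ) = (q - 1 - (a : ℕ)) + 1 := by omega
      rw [e, pow_succ]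
      linarith
  have hrel : ∀ a k i : Fin n, a < k → k < i → gL A i a = - gL A i k * gL A k a := by
    intro a k i hak hki
    have h1 := (step k i hki).2.2.2.2 a hak
    rw [hval i a (hak.trans hki) k hak hki.le, hval k a hak k hak le_rfl] at h1
    have : (2 : ℝ) ^ ((k : ℕ) - 1 - (a : ℕ)) ≠ 0 := by positivity
    apply mul_left_cancel₀ this
    linarith
  refine ⟨fun i => if i = m then -1 else gL A m i, fun i => ?_, fun i k hki => ?_⟩
  · by_cases hi : i = m
    · simp [hi]
    · have := (step i m (lt_of_le_of_ne (hm i) hi)).2.2.1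
      simpa [hi] using (abs_eq zero_le_one).mp this
  · have hk : k ≠ m := (lt_of_lt_of_le hki (hm i)).ne
    by_cases hi : i = m
    · simp [hi, hk]
    · simp only [hi, hk, if_false]
      have him := lt_of_le_of_ne (hm i) hi
      have h1 := hrel k i m hki him
      have h2 := (step i m him).2.2.1
      rw [h1]
      rcases (abs_eq zero_le_one).mp h2 with h | h <;> rw [h] <;> ring

lemma LU (i j : Fin n) : A i j = gE A i i j + ∑ q : Fin n, if q < i then gL A i q * gE A q q j else 0 := by
  have key : ∀ k : ℕ, k ≤ (i : ℕ) → A i j = gE A k i j +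
      ∑ q : Fin n, if (q : ℕ) < k then gL A i q * gE A q q j else 0 := by
    intro k
    induction k with
    | zero => intro _; simp [gE, gN_zero]
    | succ k ih =>
      intro hk
      have hki : (⟨k, by omega⟩ : Fin n) < i := Fin.lt_def.mpr (by simp; omega)
      have h3 := gE_succ A ⟨k, by omega⟩ i j hki
      have e : ∀ q : Fin n, (if (q : ℕ) < k + 1 then gL A i q * gE A q q j else 0) =
          (if (q : ℕ) < k then gL A i q * gE A q q j else 0) +
          (if q = ⟨k, by omega⟩ then gL A i q * gE A q q j else 0) := by
        intro q
        rcases lt_trichotomy (q : ℕ) k with h | h | h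
        · have : q ≠ ⟨k, by omega⟩ := fun h' => by simp [h'] at h
          simp [h, this, Nat.lt_succ_of_lt h]
        · have : q = ⟨k, by omega⟩ := Fin.ext h
          simp [this]
        · have : q ≠ ⟨k, by omega⟩ := fun h' => by simp [h'] at h
          simp [this, not_lt.mpr h.le, not_lt.mpr (Nat.succ_le_of_lt h)]
      rw [Finset.sum_congr rfl fun q _ => e q, Finset.sum_add_distrib, Finset.sum_ite_eq' Finset.univ,
        if_pos (Finset.mem_univ _)]
      simp only at h3
      rw [h3, ih (by omega)]
      ring
  exact key i le_rfl

lemma LU_sign (s : Fin n → ℝ) (hs : ∀ i, s i = 1 ∨ s i = -1)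
    (h : ∀ i k : Fin n, k < i → gL A i k = - (s i * s k)) :
    A = Matrix.diagonal s * Lmat n * Matrix.diagonal s * (Matrix.of fun i j : Fin n => gE A i i j) := by
  ext i j
  rw [LU A i j, Matrix.mul_apply]
  have e : gE A i i j = ∑ q : Fin n, if q = i then gE A q q j else 0 := by simp
  rw [e, ← Finset.sum_add_distrib]
  refine Finset.sum_congr rfl fun q _ => ?_
  simp only [Matrix.mul_diagonal, Matrix.diagonal_mul, Lmat, Matrix.of_apply]
  rcases lt_trichotomy q i with hq | hq | hq
  · simp [hq, hq.ne, hq.ne', h i q hq]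
  · subst hq
    rcases hs q with hh | hh <;> simp [hh]
  · simp [hq.ne, hq.ne', hq.not_gt]

end

noncomputable def Gn (n i j : ℕ) : ℝ :=
  if i < j then -((n : ℝ) - j - 2) * 2 ^ (j - i - 1)
  else if i = j then ((n : ℝ) - j - 1) * (alpha (j + 1) - 1) + 1
  else - alpha (j + 1)

noncomputable def tn (n j : ℕ) : ℝ := if j = n - 2 then (alpha (n - 1))⁻¹ else 1

lemma alpha_ge (j : ℕ) : 1 ≤ alpha j := by
  have : (1 : ℝ) ≤ 4 ^ (j - 1) := one_le_pow₀ (by norm_num)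
  unfold alpha; linarith

lemma alpha_succ (j : ℕ) : alpha (j + 1) = 1 + 2 / 3 * (4 ^ j - 1) := by simp [alpha]

lemma Qhat_eq (n : ℕ) (hn : 3 ≤ n) (i j : Fin n) : Qhat n i j = tn n j * Gn n i j := by
  have ha : alpha (n - 1) ≠ 0 := by have := alpha_ge (n - 1); linarith
  obtain ⟨i, hi⟩ := i
  obtain ⟨j, hj⟩ := j
  obtain ⟨m, rfl⟩ : ∃ m, n = m + 2 := ⟨n - 2, by omega⟩
  simp only [Qhat, tn, Gn, Nat.add_sub_cancel] at *
  have e1 : m + 2 - 1 = m + 1 := rfl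
  rw [e1] at *
  by_cases h1 : j = m + 1
  · subst h1
    by_cases h2 : i = m + 1
    · subst h2; simp; left; norm_num
    · have h3 : i < m + 1 := by omega
      have h4 : m + 1 - i - 1 = m - i := by omega
      simp [h2, h3, h4]
  · by_cases h2 : j = m
    · subst h2
      by_cases h3 : i = j
      · subst h3; have ha2 : alpha (i + 1) ≠ 0 := ha
        simp; field_simp; ring
      · by_cases h4 : i = j + 1
        · subst h4; simp; exact (inv_mul_cancel₀ ha).symm
        · have h5 : i < j := by omega
          simp [h3, h4, h5]
    · simp [h1, h2]

lemma sum_four (k : ℕ) : ∑ a ∈ Finset.range k, ((2 : ℝ) ^ (k - 1 - a)) ^ 2 = (4 ^ k - 1) / 3 := by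
  rw [Finset.sum_range_reflect (fun a => ((2 : ℝ) ^ a) ^ 2)]
  induction k with
  | zero => simp
  | succ k ih =>
    rw [Finset.sum_range_succ, ih, ← pow_mul, mul_comm k 2, pow_mul, pow_succ]; norm_num; ring

lemma sum_lowerA (v : ℕ → ℝ) (i N : ℕ) (h : i + 1 ≤ N) :
    ∑ l ∈ Finset.range N, (if i = l then 1 else if l < i then -1 else 0) * v l =
      v i - ∑ l ∈ Finset.range i, v l := by
  induction N, h using Nat.le_induction with
  | base =>
    rw [Finset.sum_range_succ, Finset.sum_congr rfl (g := fun l => - v l)]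
    · simp; ring
    · intro l hl
      have := Finset.mem_range.mp hl
      simp [this, this.ne']
  | succ N hN ih =>
    rw [Finset.sum_range_succ, ih]
    have h1 : i ≠ N := by omega
    have h2 : ¬ N < i := by omega
    simp [h1, h2]

lemma sum_lowerB (y : ℕ → ℝ) (i N : ℕ) (h : i + 1 ≤ N) :
    ∑ l ∈ Finset.range N, (if l = i then 1 else if i < l then -1 else 0) * y l =
      y i - ∑ l ∈ Finset.Ico (i + 1) N, y l := by
  induction N, h using Nat.le_induction with
  | base =>
    rw [Finset.sum_range_succ, Finset.sum_eq_zero]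
    · simp
    · intro l hl
      have := Finset.mem_range.mp hl
      simp [this.ne, this.not_gt]
  | succ N hN ih =>
    rw [Finset.sum_range_succ, ih, Finset.sum_Ico_succ_top hN]
    have h1 : N ≠ i := by omega
    have h2 : i < N := by omega
    simp [h1, h2]; ring

lemma Gn_tail (n j : ℕ) (hj : j < n) (d : ℕ) (hd : d ≤ j) :
    ∑ l ∈ Finset.Ico (j - d) n, Gn n l j = -((n : ℝ) - j - 2) * 2 ^ d := by
  induction d with
  | zero =>
    rw [Nat.sub_zero, Finset.sum_eq_sum_Ico_succ_bot hj, Finset.sum_congr rfl (g := fun _ => - alpha (j + 1))]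
    · have : ((n - (j + 1) : ℕ) : ℝ) = (n : ℝ) - j - 1 := by
        rw [Nat.cast_sub hj]; push_cast; ring
      simp only [Finset.sum_const, Nat.card_Ico, nsmul_eq_mul, this, Gn]
      simp; ring
    · intro l hl
      have := Finset.mem_Ico.mp hl
      have h1 : ¬ l < j := by omega
      have h2 : l ≠ j := by omega
      simp [Gn, h1, h2]
  | succ d ih =>
    rw [Finset.sum_eq_sum_Ico_succ_bot (by omega)]
    have e : j - (d + 1) + 1 = j - d := by omega
    rw [e, ih (by omega)]
    have h1 : j - (d + 1) < j := by omega
    have h2 : j - (j - (d + 1)) - 1 = d := by omega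
    simp only [Gn, h1, if_true, h2]
    ring

lemma sum_fin_nat {n : ℕ} (f : Fin n → ℝ) (g : ℕ → ℝ) (h : ∀ i : Fin n, f i = g i) :
    ∑ i, f i = ∑ i ∈ Finset.range n, g i := by
  rw [← Fin.sum_univ_eq_sum_range]
  exact Finset.sum_congr rfl fun i _ => h i

lemma LtQ (n : ℕ) (hn : 3 ≤ n) (i j : Fin n) (hij : i < j) : ((Lmat n)ᵀ * Qhat n) i j = 0 := by
  rw [Matrix.mul_apply]
  have e : ∀ l : Fin n, (Lmat n)ᵀ i l * Qhat n l j =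
      (fun l : ℕ => tn n j * ((if l = (i : ℕ) then 1 else if (i : ℕ) < l then -1 else 0) * Gn n l j)) l := by
    intro l
    rw [Qhat_eq n hn]
    simp only [Matrix.transpose_apply, Lmat, Fin.ext_iff, Fin.lt_def]
    ring
  rw [sum_fin_nat _ (fun l : ℕ => tn n j * ((if l = (i : ℕ) then 1 else if (i : ℕ) < l then -1 else 0) * Gn n l j)) e, ← Finset.mul_sum, sum_lowerB (fun l => Gn n l j) i n i.isLt]
  have hij' : (i : ℕ) < j := hij
  have := Gn_tail n j j.isLt (j - i - 1) (by omega)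
  have e2 : (j : ℕ) - (j - i - 1) = i + 1 := by omega
  rw [e2] at this
  rw [this]
  simp [Gn, hij']

noncomputable def sn (n j i : ℕ) : ℝ :=
  if i ≤ j then -((n : ℝ) - j - 2) * (2 ^ (j - i) * (4 ^ i - 1) / 3) else alpha (j + 1)

lemma Gn_sn (n i j : ℕ) : Gn n i j = sn n j (i + 1) - 2 * sn n j i := by
  rcases lt_trichotomy i j with h | h | h
  · obtain ⟨d, rfl⟩ : ∃ d, j = i + 1 + d := ⟨j - (i + 1), by omega⟩
    have e1 : i + 1 + d - i = d + 1 := by omega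
    have e2 : i + 1 + d - (i + 1) = d := by omega
    simp only [Gn, sn, h, h.le, Nat.succ_le_of_lt h, if_true, e1, e2, Nat.add_sub_cancel]
    ring
  · subst h
    simp [Gn, sn, alpha_succ]; ring
  · have h1 : ¬ i ≤ j := by omega
    have h2 : ¬ i < j := by omega
    have h3 : ¬ i + 1 ≤ j := by omega
    have h4 : i ≠ j := by omega
    simp only [Gn, sn, h1, h2, h3, h4, if_false]; ring

lemma QLR (n : ℕ) (hn : 3 ≤ n) : ∃ R : Matrix (Fin n) (Fin n) ℝ, (∀ i j, j < i → R i j = 0) ∧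
    Qhat n = Lmat n * R := by
  refine ⟨Matrix.of fun i j => tn n j * (sn n j (i + 1) - sn n j i), ?_, ?_⟩
  · intro i j h
    have h' : (j : ℕ) < i := h
    have h1 : ¬ (i : ℕ) ≤ j := by omega
    have h2 : ¬ (i : ℕ) + 1 ≤ j := by omega
    simp only [Matrix.of_apply, sn, h1, h2, if_false]; ring
  · ext i j
    rw [Matrix.mul_apply]
    have e : ∀ l : Fin n, Lmat n i l * (Matrix.of fun i j : Fin n => tn n j * (sn n j (i + 1) - sn n j i)) l j =
      (fun l : ℕ => tn n j * ((if (i : ℕ) = l then 1 else if l < (i : ℕ) then -1 else 0) *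
        (sn n j (l + 1) - sn n j l))) l := by
      intro l
      simp only [Matrix.of_apply, Lmat, Fin.ext_iff, Fin.lt_def]
      ring
    rw [sum_fin_nat _ (fun l : ℕ => tn n j * ((if (i : ℕ) = l then 1 else if l < (i : ℕ) then -1 else 0) *
        (sn n j (l + 1) - sn n j l))) e, ← Finset.mul_sum,
      sum_lowerA (fun l => sn n j (l + 1) - sn n j l) i n i.isLt, Finset.sum_range_sub, Qhat_eq n hn, Gn_sn]
    have h0 : sn n j 0 = 0 := by simp [sn]
    rw [h0]; ring

lemma Gn_norm (n j : ℕ) (hj : j < n) : ∑ i ∈ Finset.range n, Gn n i j ^ 2 =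
    ((n : ℝ) - j - 2) ^ 2 * ((4 ^ j - 1) / 3) + (((n : ℝ) - j - 1) * (alpha (j + 1) - 1) + 1) ^ 2
     + ((n : ℝ) - j - 1) * alpha (j + 1) ^ 2 := by
  rw [← Finset.sum_range_add_sum_Ico _ hj.le, Finset.sum_eq_sum_Ico_succ_bot hj, ← add_assoc]
  congr 1
  · congr 1
    · rw [← sum_four j, Finset.mul_sum]
      refine Finset.sum_congr rfl fun l hl => ?_
      have := Finset.mem_range.mp hl
      have e : j - l - 1 = j - 1 - l := by omega
      simp only [Gn, this, if_true, e]; ring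
    · simp [Gn]
  · have : ((n - (j + 1) : ℕ) : ℝ) = (n : ℝ) - j - 1 := by
      rw [Nat.cast_sub hj]; push_cast; ring
    rw [← this, ← Nat.card_Ico, ← nsmul_eq_mul, ← Finset.sum_const]
    refine Finset.sum_congr rfl fun l hl => ?_
    have := Finset.mem_Ico.mp hl
    have h1 : ¬ l < j := by omega
    have h2 : l ≠ j := by omega
    simp [Gn, h1, h2]

lemma Qhat_norm (n : ℕ) (hn : 3 ≤ n) (j : Fin n) : ∑ i, Qhat n i j ^ 2 = Dhat n j j := by
  have e : ∀ i : Fin n, Qhat n i j ^ 2 = (fun i : ℕ => tn n j ^ 2 * Gn n i j ^ 2) i := by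
    intro i
    rw [Qhat_eq n hn]; ring
  rw [sum_fin_nat _ (fun i : ℕ => tn n j ^ 2 * Gn n i j ^ 2) e, ← Finset.mul_sum, Gn_norm n j j.isLt]
  obtain ⟨j, hj⟩ := j
  obtain ⟨m, rfl⟩ : ∃ m, n = m + 2 := ⟨n - 2, by omega⟩
  have e1 : m + 2 - 1 = m + 1 := rfl
  simp only [Dhat, Matrix.diagonal_apply_eq, tn, Nat.add_sub_cancel, e1]
  by_cases h0 : j = 0
  · subst h0
    have : (0 : ℕ) ≠ m := by omega
    simp [this, alpha]
  · obtain ⟨q, rfl⟩ : ∃ q, j = q + 1 := ⟨j - 1, by omega⟩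
    by_cases h1 : q + 1 = m
    · subst h1
      have ha := alpha_ge (q + 1 + 1)
      have ha' : alpha (q + 1 + 1) ≠ 0 := by linarith
      simp
      field_simp; ring
    · by_cases h2 : q = m
      · subst h2
        simp [alpha_succ]; ring
      · have h3 : (4 : ℝ) ^ (q + 1) - 1 ≠ 0 := by
          have : (1 : ℝ) < 4 ^ (q + 1) := one_lt_pow₀ (by norm_num) (by omega)
          linarith
        have h4 : 2 * alpha (q + 1 + 1) - 2 ≠ 0 := by
          rw [alpha_succ]; intro h; apply h3; linarith
        simp only [h0, h1, if_false, Nat.add_right_cancel_iff, h2]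
        have h5 : alpha (q + 1) = (alpha (q + 1 + 1) + 1) / 4 := by
          rw [alpha_succ, alpha_succ]; ring
        have h6 : ((4 : ℝ) ^ (q + 1) - 1) / 3 = (alpha (q + 1 + 1) - 1) / 2 := by
          rw [alpha_succ]; ring
        rw [h5, h6]
        generalize alpha (q + 1 + 1) = α at *
        have h7 : α - 1 ≠ 0 := fun h => h4 (by linarith)
        have h8 : 2 * α - 2 = 2 * (α - 1) := by ring
        rw [h8]
        field_simp
        push_cast
        ring

lemma Dhat_pos (n : ℕ) (hn : 3 ≤ n) (j : Fin n) : 0 < Dhat n j j := by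
  rw [← Qhat_norm n hn]
  refine Finset.sum_pos' (fun _ _ => sq_nonneg _) ⟨j, Finset.mem_univ _, ?_⟩
  apply pow_pos
  rw [Qhat_eq n hn]
  apply mul_pos
  · unfold tn; split_ifs
    · have := alpha_ge (n - 1); positivity
    · norm_num
  · simp only [Gn, lt_irrefl, if_false, if_true]
    have h1 := alpha_ge (j + 1)
    have h2 : ((j : ℕ) : ℝ) + 1 ≤ n := by exact_mod_cast j.isLt
    have : 0 ≤ ((n : ℝ) - j - 1) * (alpha (j + 1) - 1) := mul_nonneg (by linarith) (by linarith)
    linarith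

lemma two_alpha (n : ℕ) (hn : 3 ≤ n) : 2 * alpha (n - 1) = 1 + ((4 : ℝ) ^ (n - 1) - 1) / 3 := by
  obtain ⟨m, rfl⟩ : ∃ m, n = m + 2 := ⟨n - 2, by omega⟩
  have e1 : m + 2 - 1 = m + 1 := rfl
  rw [e1, alpha_succ, pow_succ]; ring

lemma maxGE_bound {n : ℕ} (hn : 3 ≤ n) (A : Matrix (Fin n) (Fin n) ℝ) (c : ℝ)
    (h : ∀ k i j : Fin n, k ≤ i → k ≤ j → |geEntry A k i j| ≤ c) : maxGE A ≤ c := by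
  have : Nonempty (Fin n) := ⟨⟨0, by omega⟩⟩
  refine ciSup_le fun k => ?_
  have : Nonempty {i : Fin n // k ≤ i} := ⟨⟨k, le_rfl⟩⟩
  exact ciSup_le fun i => ciSup_le fun j => h k i.1 j.1 i.2 j.2

lemma le_maxGE {n : ℕ} (A : Matrix (Fin n) (Fin n) ℝ)
    (k i j : Fin n) (hi : k ≤ i) (hj : k ≤ j) : |geEntry A k i j| ≤ maxGE A := by
  refine le_trans ?_ (le_ciSup (Set.finite_range _).bddAbove k)
  refine le_trans ?_ (le_ciSup (Set.finite_range _).bddAbove (⟨i, hi⟩ : {i : Fin n // k ≤ i}))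
  exact le_ciSup (f := fun j : {j : Fin n // k ≤ j} => |geEntry A k i j.1|)
    (Set.finite_range _).bddAbove (⟨j, hj⟩ : {j : Fin n // k ≤ j})

lemma maxGE_attained {n : ℕ} (hn : 3 ≤ n) (A : Matrix (Fin n) (Fin n) ℝ) :
    ∃ k i j : Fin n, k ≤ i ∧ k ≤ j ∧ |geEntry A k i j| = maxGE A := by
  have : Nonempty (Fin n) := ⟨⟨0, by omega⟩⟩
  obtain ⟨k, hk⟩ := exists_eq_ciSup_of_finite (f := fun k : Fin n =>
    ⨆ i : {i : Fin n // k ≤ i}, ⨆ j : {j : Fin n // k ≤ j}, |geEntry A k i.1 j.1|)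
  have : Nonempty {i : Fin n // k ≤ i} := ⟨⟨k, le_rfl⟩⟩
  obtain ⟨i, hi⟩ := exists_eq_ciSup_of_finite (f := fun i : {i : Fin n // k ≤ i} =>
    ⨆ j : {j : Fin n // k ≤ j}, |geEntry A k i.1 j.1|)
  obtain ⟨j, hj⟩ := exists_eq_ciSup_of_finite (f := fun j : {j : Fin n // k ≤ j} =>
    |geEntry A k i.1 j.1|)
  exact ⟨k, i.1, j.1, i.2, j.2, hj.trans (hi.trans hk)⟩

/-- the extremal orthogonal matrices are the sign-scalings of `Qmat n` -/
lemma rigid (n : ℕ) (hn : 3 ≤ n) (Q : Matrix (Fin n) (Fin n) ℝ) (hQ : Qᵀ * Q = 1)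
    (s : Fin n → ℝ) (hs : ∀ i, s i = 1 ∨ s i = -1) (U : Matrix (Fin n) (Fin n) ℝ)
    (hU : ∀ i j, j < i → U i j = 0)
    (h : Q = Matrix.diagonal s * Lmat n * Matrix.diagonal s * U) :
    ∃ D Dt : Matrix (Fin n) (Fin n) ℝ,
        IsSignDiag D ∧ IsSignDiag Dt ∧ Q = D * Qmat n * Dt := by
  obtain ⟨R, hR, hQR⟩ := QLR n hn
  have hQ' : Q * Qᵀ = 1 := mul_eq_one_comm.mp hQ
  set S := Matrix.diagonal s with hS
  have hSS : S * S = 1 := by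
    rw [hS, Matrix.diagonal_mul_diagonal, ← Matrix.diagonal_one]
    congr 1; ext i
    rcases hs i with h | h <;> simp [h]
  have hSt : Sᵀ = S := Matrix.diagonal_transpose s
  set X := Qᵀ * (S * Qhat n) with hX
  have hQX : Q * X = S * Qhat n := by rw [hX, ← Matrix.mul_assoc, hQ', Matrix.one_mul]
  have hdQ : Q.det ≠ 0 := by
    have := congrArg Matrix.det hQ
    rw [Matrix.det_mul, Matrix.det_one] at this
    exact right_ne_zero_of_mul (this ▸ one_ne_zero)
  have hdU : U.det ≠ 0 := by
    rw [h, Matrix.det_mul] at hdQ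
    exact right_ne_zero_of_mul hdQ
  have hdL : IsUnit (Lmat n).det := by
    apply Ne.isUnit
    intro h0
    apply hdQ
    rw [h]; simp [h0]
  -- upper triangular
  have hup : ∀ i j, j < i → X i j = 0 := by
    have e1 : Lmat n * (S * U * X) = Lmat n * R := by
      have : S * (S * Lmat n * S * U * X) = S * (S * Qhat n) := by rw [← h, hQX]
      simp only [← Matrix.mul_assoc, hSS, Matrix.one_mul] at this
      rw [← hQR, ← this]
      simp only [Matrix.mul_assoc]
    have e2 : S * U * X = R := by
      have := congrArg (fun M => (Lmat n)⁻¹ * M) e1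
      simpa [← Matrix.mul_assoc, Matrix.nonsing_inv_mul _ hdL] using this
    have e3 : X = U⁻¹ * (S * R) := by
      rw [← e2]
      simp only [← Matrix.mul_assoc]
      rw [Matrix.mul_assoc U⁻¹ S S, hSS, Matrix.mul_one, Matrix.nonsing_inv_mul _ (Ne.isUnit hdU), Matrix.one_mul]
    have b1 : Matrix.BlockTriangular U id := fun i j hij => hU i j hij
    have : Invertible U := Matrix.invertibleOfIsUnitDet U (Ne.isUnit hdU)
    have b2 := Matrix.blockTriangular_inv_of_blockTriangular b1
    have b3 : Matrix.BlockTriangular (S * R) id := fun i j hij => by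
      rw [hS, Matrix.diagonal_mul, hR i j hij, mul_zero]
    intro i j hij
    rw [e3]
    exact (b2.mul b3) hij
  have hlow : ∀ i j, i < j → X i j = 0 := by
    intro i j hij
    have e : X = Uᵀ * (S * ((Lmat n)ᵀ * Qhat n)) := by
      have : Qᵀ = Uᵀ * (S * ((Lmat n)ᵀ * S)) := by
        rw [h]; simp [Matrix.transpose_mul, hSt]
      rw [hX, this]
      simp only [Matrix.mul_assoc]
      rw [← Matrix.mul_assoc S S, hSS, Matrix.one_mul]
    rw [e, Matrix.mul_apply]
    refine Finset.sum_eq_zero fun l _ => ?_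
    by_cases hl : i < l
    · rw [Matrix.transpose_apply, hU l i hl, zero_mul]
    · rw [hS, Matrix.diagonal_mul, LtQ n hn l j (lt_of_le_of_lt (not_lt.mp hl) hij)]; simp
  have hcol : ∀ i j, s i * Qhat n i j = Q i j * X j j := by
    intro i j
    have := congrFun (congrFun hQX i) j
    rw [hS, Matrix.diagonal_mul, Matrix.mul_apply, Finset.sum_eq_single j] at this
    · exact this.symm
    · intro b _ hb
      rcases lt_or_gt_of_ne hb with h | h
      · rw [hlow b j h, mul_zero]
      · rw [hup b j h, mul_zero]
    · simp
  have hX2 : ∀ j, X j j ^ 2 = Dhat n j j := by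
    intro j
    rw [← Qhat_norm n hn]
    have h1 : ∑ i, Q i j ^ 2 = 1 := by
      have := congrFun (congrFun hQ j) j
      simpa [Matrix.mul_apply, ← pow_two] using this
    calc X j j ^ 2 = ∑ i, (Q i j * X j j) ^ 2 := by
          simp only [mul_pow]; rw [← Finset.sum_mul, h1, one_mul]
      _ = ∑ i, Qhat n i j ^ 2 := by
          refine Finset.sum_congr rfl fun i _ => ?_
          rw [← hcol i j, mul_pow]
          rcases hs i with h | h <;> simp [h]
  have hsig : ∀ j, X j j / √(Dhat n j j) = 1 ∨ X j j / √(Dhat n j j) = -1 := by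
    intro j
    have hp := Real.sqrt_pos.mpr (Dhat_pos n hn j)
    have : |X j j| = √(Dhat n j j) := by rw [← hX2, Real.sqrt_sq_eq_abs]
    rcases abs_cases (X j j) with ⟨h1, _⟩ | ⟨h1, _⟩
    · left; rw [← this, h1, div_self]; intro h0; rw [← this, h1, h0] at hp; exact lt_irrefl _ hp
    · right; rw [← this, h1, div_neg, div_self]; intro h0; rw [← this, h1, h0] at hp; simp at hp
  refine ⟨S, Matrix.diagonal fun j => X j j / √(Dhat n j j), ⟨fun i j hij => ?_, fun i => ?_⟩,
    ⟨fun i j hij => ?_, fun i => ?_⟩, ?_⟩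
  · exact Matrix.diagonal_apply_ne _ hij
  · simpa [hS] using hs i
  · exact Matrix.diagonal_apply_ne _ hij
  · simpa using hsig i
  · ext i j
    have hp := Real.sqrt_pos.mpr (Dhat_pos n hn j)
    rw [Matrix.mul_diagonal, hS, Matrix.diagonal_mul, Qmat, Matrix.mul_diagonal]
    rw [← mul_assoc, hcol i j]
    have h2 : √(Dhat n j j) ^ 2 = X j j ^ 2 := by rw [hX2, Real.sq_sqrt (Dhat_pos n hn j).le]
    have h3 : X j j ≠ 0 := by
      intro h0
      have := Dhat_pos n hn j
      rw [← hX2, h0] at this; simp at this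
    field_simp
    rw [h2]

/-- for `n ≥ 3` and `Q ∈ O(n)` PP, the maximal GE intermediate entry of `Q`
is at most `√(2α_{n-1})`, with equality iff `Q = D Q_n D̃` for diagonal sign matrices
`D, D̃`. -/
theorem orth_max_pivot_bound (n : ℕ) (hn : 3 ≤ n) (Q : Matrix (Fin n) (Fin n) ℝ)
    (hQ : Qᵀ * Q = 1) (hPP : IsPP Q) :
    maxGE Q ≤ Real.sqrt (2 * alpha (n - 1)) ∧
    (maxGE Q = Real.sqrt (2 * alpha (n - 1)) ↔
      ∃ D Dt : Matrix (Fin n) (Fin n) ℝ,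
        IsSignDiag D ∧ IsSignDiag Dt ∧ Q = D * Qmat n * Dt) := by
  have hQ' : Q * Qᵀ = 1 := mul_eq_one_comm.mp hQ
  have hdQ : Q.det ≠ 0 := by
    have := congrArg Matrix.det hQ
    rw [Matrix.det_mul, Matrix.det_one] at this
    exact right_ne_zero_of_mul (this ▸ one_ne_zero)
  have hp := pivot_ne Q hdQ hPP
  have hL := gL_le Q hdQ hPP
  have hge : ∀ k i j : Fin n, k ≤ i → geEntry Q k i j = gE Q k i j :=
    fun k i j h => geEntry_eq Q k i j h fun q _ => hp q
  have h2a := two_alpha n hn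
  have hmono : ∀ k : ℕ, k ≤ n - 1 → (4 : ℝ) ^ k ≤ 4 ^ (n - 1) :=
    fun k hk => pow_le_pow_right₀ (by norm_num) hk
  have hbound : maxGE Q ≤ Real.sqrt (2 * alpha (n - 1)) := by
    apply maxGE_bound hn
    intro k i j hki _
    rw [hge k i j hki]
    apply Real.abs_le_sqrt
    have h1 := entry_sq_le Q hQ hL k i j hki
    have h2 := hmono k (by omega)
    rw [h2a]; linarith
  set m : Fin n := ⟨n - 1, by omega⟩ with hm
  have hmax : ∀ i : Fin n, i ≤ m := fun i => Fin.le_def.mpr (by simp [hm]; omega)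
  refine ⟨hbound, fun heq => ?_, ?_⟩
  · obtain ⟨k, i, j, hki, hkj, h⟩ := maxGE_attained hn Q
    rw [heq, hge k i j hki] at h
    have hsq : gE Q k i j ^ 2 = 2 * alpha (n - 1) := by
      rw [← sq_abs, h, Real.sq_sqrt]
      have := alpha_ge (n - 1); linarith
    have hkm : k = m := by
      by_contra hne
      have hlt : (k : ℕ) < n - 1 := Fin.lt_def.mp (lt_of_le_of_ne (hmax k) hne)
      have h1 := entry_sq_le Q hQ hL k i j hki
      have h2 : (4 : ℝ) ^ (k : ℕ) < 4 ^ (n - 1) := pow_lt_pow_right₀ (by norm_num) hlt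
      rw [hsq, h2a] at h1
      linarith
    have him : i = m := le_antisymm (hmax i) (hkm ▸ hki)
    rw [hkm, him, h2a] at hsq
    have hco := coeff_eq Q hQ hL m m j le_rfl hsq
    obtain ⟨s, hs, hls⟩ := signs Q hL m hmax hco
    refine rigid n hn Q hQ s hs _ ?_ (LU_sign Q s hs hls)
    intro i j hij
    exact gE_zero_below Q i (fun q _ => hp q) i j hij hij
  · rintro ⟨D, Dt, hD, hDt, hQeq⟩
    apply le_antisymm hbound
    have hu : gE Q m m m * Q m m = 1 := by
      have h1 : gE Q m * Qᵀ = gN Q m := by rw [gE, Matrix.mul_assoc, hQ', Matrix.mul_one]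
      have h2 := congrFun (congrFun h1 m) m
      rw [(gN_struct Q m).2.1, Matrix.mul_apply, Finset.sum_eq_single m] at h2
      · exact h2
      · intro b _ hb
        have hb' := lt_of_le_of_ne (hmax b) hb
        rw [gE_zero_below Q m (fun q _ => hp q) m b hb' hb', zero_mul]
      · simp
    have hDd : D = Matrix.diagonal fun i => D i i := by
      ext i j
      by_cases h : i = j
      · subst h; simp
      · rw [Matrix.diagonal_apply_ne _ h, hD.1 i j h]
    have hDtd : Dt = Matrix.diagonal fun i => Dt i i := by
      ext i j
      by_cases h : i = j
      · subst h; simp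
      · rw [Matrix.diagonal_apply_ne _ h, hDt.1 i j h]
    have hqm : Qmat n m m = (√(2 * alpha (n - 1)))⁻¹ := by
      have h1 : n - 1 ≠ 0 := by omega
      have h2 : n - 1 ≠ n - 2 := by omega
      simp [Qmat, Qhat, Dhat, hm, h1, h2]
    have hQm : |Q m m| = (√(2 * alpha (n - 1)))⁻¹ := by
      rw [hQeq, hDd, hDtd, Matrix.mul_diagonal, Matrix.diagonal_mul, hqm, abs_mul, abs_mul]
      have h1 : |D m m| = 1 := by rcases hD.2 m with h | h <;> simp [h]
      have h2 : |Dt m m| = 1 := by rcases hDt.2 m with h | h <;> simp [h]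
      rw [h1, h2, one_mul, mul_one, abs_of_nonneg (by positivity)]
    have hle := le_maxGE Q m m m le_rfl le_rfl
    rw [hge m m m le_rfl] at hle
    refine le_trans (le_of_eq ?_) hle
    have h3 := congrArg abs hu
    rw [abs_mul, hQm, abs_one] at h3
    have hpos : 0 < √(2 * alpha (n - 1)) := Real.sqrt_pos.mpr (by have := alpha_ge (n - 1); linarith)
    field_simp at h3
    exact h3.symm
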